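/- Let p ≥ 7 be an odd integer. For every real number c there exist ε > 0 and a function u, real-analytic on (−ε, ε), such that u satisfies the self-similar profile equation (1−ρ²)u''(ρ) + (2/ρ − (2+2α)ρ)u'(ρ) − α(α+1)u(ρ) + u(ρ)^p = 0 for all ρ ∈ (0, ε), with u(0) = c, u'(0) = 0, and u''(0) = (2/3)·((p+1)c/(p−1)² − c^p/2). Moreover this solution is unique: any two functions real-analytic near 0 with value c and vanishing derivative at 0 that satisfy the equation on a punctured right neighborhood of 0 coincide near 0. -/

import Mathlib

open Set Real Filter

/-- The exponent `α = 2/(p-1)`. -/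
noncomputable def alphaP (p : ℕ) : ℝ := 2 / ((p : ℝ) - 1)

/-- `b₀ = (2(p+1)/(p-1)²)^(1/(p-1))`, the constant solution. -/
noncomputable def bZero (p : ℕ) : ℝ :=
  (2 * ((p : ℝ) + 1) / ((p : ℝ) - 1) ^ 2) ^ ((1 : ℝ) / ((p : ℝ) - 1))

/-- `b∞ = (2(p-3)/(p-1)²)^(1/(p-1))`. -/
noncomputable def bInfty (p : ℕ) : ℝ :=
  (2 * ((p : ℝ) - 3) / ((p : ℝ) - 1) ^ 2) ^ ((1 : ℝ) / ((p : ℝ) - 1))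

/-- The singular static solution `u∞(ρ) = b∞ ρ^(-α)`. -/
noncomputable def uInfty (p : ℕ) (ρ : ℝ) : ℝ := bInfty p * ρ ^ (-(alphaP p))

/-- The self-similar profile equation
`(1-ρ²)u'' + (2/ρ - (2+2α)ρ)u' - α(α+1)u + u^p = 0` at the point `ρ`. -/
def ProfileEq (p : ℕ) (u : ℝ → ℝ) (ρ : ℝ) : Prop :=
  (1 - ρ ^ 2) * deriv (deriv u) ρ + (2 / ρ - (2 + 2 * alphaP p) * ρ) * deriv u ρ
    - alphaP p * (alphaP p + 1) * u ρ + u ρ ^ p = 0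

open PowerSeries in
lemma coeff_pow_congr_le (f g : PowerSeries ℝ) (n : ℕ)
    (h : ∀ k ≤ n, coeff k f = coeff k g) (p : ℕ) :
    ∀ k ≤ n, coeff k (f ^ p) = coeff k (g ^ p) := by
  induction p with
  | zero => intro k _; simp
  | succ p ih =>
    intro k hk
    rw [pow_succ, pow_succ, coeff_mul, coeff_mul]
    refine Finset.sum_congr rfl fun x hx => ?_
    have := Finset.HasAntidiagonal.mem_antidiagonal.1 hx
    rw [ih x.1 (by omega), h x.2 (by omega)]

/-- Taylor coefficients. -/
noncomputable def aCoef (p : ℕ) (c : ℝ) : ℕ → ℝ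
  | 0 => c
  | 1 => 0
  | (n + 2) => (((n : ℝ) + alphaP p) * (n + 1 + alphaP p) * aCoef p c n
      - PowerSeries.coeff n ((PowerSeries.mk fun k => if h : k ≤ n then aCoef p c k else 0) ^ p))
      / ((n + 2) * (n + 3))
decreasing_by all_goals omega

lemma aCoef_zero (p : ℕ) (c : ℝ) : aCoef p c 0 = c := by rw [aCoef]
lemma aCoef_one (p : ℕ) (c : ℝ) : aCoef p c 1 = 0 := by rw [aCoef]

lemma aCoef_rec (p : ℕ) (c : ℝ) (n : ℕ) :
    aCoef p c (n + 2) = (((n : ℝ) + alphaP p) * (n + 1 + alphaP p) * aCoef p c n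
      - PowerSeries.coeff n ((PowerSeries.mk (aCoef p c)) ^ p)) / ((n + 2) * (n + 3)) := by
  rw [aCoef]
  congr 2
  refine coeff_pow_congr_le _ _ n ?_ p n le_rfl
  intro k hk
  simp [hk]

open PowerSeries in
lemma sum_mul_le (f g : PowerSeries ℝ) (r : ℝ) (hr : 0 ≤ r) (N : ℕ) :
    ∑ n ∈ Finset.range N, |coeff n (f * g)| * r ^ n ≤
      (∑ n ∈ Finset.range N, |coeff n f| * r ^ n) * ∑ n ∈ Finset.range N, |coeff n g| * r ^ n := by
  have h1 : ∀ n ∈ Finset.range N, |coeff n (f * g)| * r ^ n ≤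
      ∑ x ∈ Finset.HasAntidiagonal.antidiagonal n, (|coeff x.1 f| * r ^ x.1) * (|coeff x.2 g| * r ^ x.2) := by
    intro n _
    rw [coeff_mul]
    calc _ ≤ (∑ x ∈ Finset.HasAntidiagonal.antidiagonal n, |coeff x.1 f * coeff x.2 g|) * r ^ n := by
          gcongr
          exact Finset.abs_sum_le_sum_abs _ _
      _ = _ := by
          rw [Finset.sum_mul]
          refine Finset.sum_congr rfl fun x hx => ?_
          rw [← Finset.HasAntidiagonal.mem_antidiagonal.1 hx, abs_mul, pow_add]; ring
  refine (Finset.sum_le_sum h1).trans ?_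
  rw [Finset.sum_mul_sum, ← Finset.sum_product', Finset.sum_sigma']
  rw [← Finset.sum_image (f := fun y : ℕ × ℕ => (|coeff y.1 f| * r ^ y.1) * (|coeff y.2 g| * r ^ y.2))
    (g := fun x : (_ : ℕ) × (ℕ × ℕ) => x.2)]
  · refine Finset.sum_le_sum_of_subset_of_nonneg ?_ fun i _ _ => by positivity
    intro y hy
    simp only [Finset.mem_image, Finset.mem_sigma, Finset.mem_range, Finset.mem_product,
      Finset.HasAntidiagonal.mem_antidiagonal] at hy ⊢
    obtain ⟨x, ⟨h1, h2⟩, rfl⟩ := hy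
    omega
  · rintro ⟨m, y⟩ hm ⟨n, z⟩ hn h
    simp only [Finset.coe_sigma, Set.mem_sigma_iff, Finset.mem_coe,
      Finset.HasAntidiagonal.mem_antidiagonal] at hm hn h
    subst h
    obtain rfl : m = n := hm.2.symm.trans hn.2
    rfl

lemma sum_pow_le (f : PowerSeries ℝ) (r : ℝ) (hr : 0 ≤ r) (N p : ℕ) :
    ∑ n ∈ Finset.range N, |PowerSeries.coeff n (f ^ (p+1))| * r ^ n ≤
      (∑ n ∈ Finset.range N, |PowerSeries.coeff n f| * r ^ n) ^ (p+1) := by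
  induction p with
  | zero => simp
  | succ p ih =>
    rw [pow_succ, pow_succ _ (p+1)]
    refine (sum_mul_le _ _ r hr N).trans ?_
    gcongr

lemma aCoef_bound (p : ℕ) (hp : 7 ≤ p) (c : ℝ) :
    ∃ r : ℝ, 0 < r ∧ r ≤ 1 ∧ ∀ N, ∑ n ∈ Finset.range N, |aCoef p c n| * r ^ n ≤ |c| + 1 := by
  set M := |c| + 1 with hM
  have hM0 : 0 < M := by positivity
  refine ⟨1 / (1 + M + M ^ p), by positivity, ?_, ?_⟩
  · rw [div_le_one (by positivity)]; nlinarith [pow_pos hM0 p]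
  set r := 1 / (1 + M + M ^ p) with hr
  have hr0 : 0 < r := by positivity
  have hr1 : r ≤ 1 := by rw [hr, div_le_one (by positivity)]; nlinarith [pow_pos hM0 p]
  have hrM : r ^ 2 * (M + M ^ p) ≤ 1 := by
    have : r * (1 + M + M ^ p) = 1 := by rw [hr]; field_simp
    have : r * (M + M ^ p) ≤ 1 := by linarith
    have h2 : 0 ≤ r * (M + M ^ p) := by positivity
    nlinarith
  have hα0 : 0 ≤ alphaP p := by
    have : (7:ℝ) ≤ p := by exact_mod_cast hp
    unfold alphaP; apply div_nonneg <;> linarith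
  have hα1 : alphaP p ≤ 1 := by
    have : (7:ℝ) ≤ p := by exact_mod_cast hp
    unfold alphaP; rw [div_le_one] <;> linarith
  have step : ∀ n, |aCoef p c (n+2)| * r ^ (n+2) ≤ r ^ 2 * (|aCoef p c n| * r ^ n +
      |PowerSeries.coeff n ((PowerSeries.mk (aCoef p c)) ^ p)| * r ^ n) := by
    intro n
    have key : |aCoef p c (n+2)| ≤ |aCoef p c n| +
      |PowerSeries.coeff n ((PowerSeries.mk (aCoef p c)) ^ p)| := by
      have hn : (0:ℝ) ≤ n := n.cast_nonneg
      rw [aCoef_rec, abs_div, abs_of_pos (by positivity : (0:ℝ) < (n+2)*(n+3)),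
        div_le_iff₀ (by positivity)]
      refine (abs_sub _ _).trans ?_
      rw [add_mul |aCoef p c n|, abs_mul, abs_of_nonneg (by positivity : (0:ℝ) ≤ (n + alphaP p) * (n+1+alphaP p))]
      gcongr ?_ + ?_
      · rw [mul_comm]
        refine mul_le_mul_of_nonneg_left ?_ (abs_nonneg _)
        exact mul_le_mul (by linarith) (by linarith) (by positivity) (by positivity)
      · refine le_mul_of_one_le_right (abs_nonneg _) ?_
        nlinarith
    calc _ ≤ (|aCoef p c n| +
      |PowerSeries.coeff n ((PowerSeries.mk (aCoef p c)) ^ p)|) * r ^ (n+2) := by gcongr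
      _ = _ := by ring
  intro N
  induction N using Nat.twoStepInduction with
  | zero => simp; positivity
  | one => simp [aCoef_zero, hM]
  | more N ih _ =>
    rw [Finset.sum_range_succ', Finset.sum_range_succ']
    simp only [zero_add, aCoef_zero, aCoef_one, abs_zero, zero_mul, add_zero, pow_zero, mul_one]
    have h1 := Finset.sum_le_sum (s := Finset.range N) fun n _ => step n
    rw [← Finset.mul_sum, Finset.sum_add_distrib] at h1
    obtain ⟨q, rfl⟩ : ∃ q, p = q + 1 := ⟨p - 1, by omega⟩
    have h2 := sum_pow_le (PowerSeries.mk (aCoef (q+1) c)) r hr0.le N q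
    simp only [PowerSeries.coeff_mk] at h2
    have h3 : (∑ n ∈ Finset.range N, |aCoef (q+1) c n| * r ^ n) ^ (q+1) ≤ M ^ (q+1) := by
      gcongr
    have h4 := mul_le_mul_of_nonneg_left (add_le_add ih (h2.trans h3)) (sq_nonneg r)
    linarith

/-- absolutely convergent inside radius `r`. -/
def AbsConv (a : ℕ → ℝ) (r : ℝ) : Prop := ∀ s, 0 ≤ s → s < r → Summable fun n => |a n| * s ^ n

/-- derivative coefficients -/
def dCoef (a : ℕ → ℝ) : ℕ → ℝ := fun n => (n + 1) * a (n + 1)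

lemma AbsConv.deriv {a : ℕ → ℝ} {r : ℝ} (h : AbsConv a r) : AbsConv (dCoef a) r := by
  intro s hs0 hsr
  obtain ⟨t, hst, htr⟩ := exists_between hsr
  have ht0 : 0 < t := hs0.trans_lt hst
  have H := h t ht0.le htr
  have hC : ∀ n, |a n| * t ^ n ≤ ∑' n, |a n| * t ^ n := fun n =>
    H.le_tsum n fun m _ => by positivity
  set C := ∑' n, |a n| * t ^ n
  have hq : ‖s / t‖ < 1 := by
    rw [Real.norm_of_nonneg (by positivity), div_lt_one ht0]; exact hst
  have h1 := summable_pow_mul_geometric_of_norm_lt_one 1 hq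
  have h0 := summable_geometric_of_norm_lt_one hq
  refine Summable.of_nonneg_of_le (fun n => by positivity) (fun n => ?_)
    ((h1.add h0).mul_left (C / t))
  have := hC (n+1)
  have e : |dCoef a n| * s ^ n = (|a (n+1)| * t ^ (n+1)) / t * ((n + 1) * (s/t)^n) := by
    unfold dCoef
    rw [abs_mul, abs_of_nonneg (by positivity : (0:ℝ) ≤ n + 1), div_pow, pow_succ]
    field_simp
  rw [e]
  calc _ ≤ C / t * ((n + 1) * (s/t)^n) := by gcongr
    _ = _ := by ring

lemma AbsConv.summable {a : ℕ → ℝ} {r : ℝ} (h : AbsConv a r) {x : ℝ} (hx : |x| < r) :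
    Summable fun n => ‖a n * x ^ n‖ := by
  simpa [abs_mul] using h |x| (abs_nonneg x) hx

/-- sum function -/
noncomputable def pS (a : ℕ → ℝ) (x : ℝ) : ℝ := ∑' n, a n * x ^ n

lemma AbsConv.hasSum {a : ℕ → ℝ} {r : ℝ} (h : AbsConv a r) {x : ℝ} (hx : |x| < r) :
    HasSum (fun n => a n * x ^ n) (pS a x) := (h.summable hx).of_norm.hasSum

lemma AbsConv.hasDerivAt {a : ℕ → ℝ} {r : ℝ} (h : AbsConv a r) {x : ℝ} (hx : |x| < r) :
    HasDerivAt (pS a) (pS (dCoef a) x) x := by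
  obtain ⟨t, hxt, htr⟩ := exists_between hx
  have ht0 : 0 < t := (abs_nonneg x).trans_lt hxt
  have hd := h.deriv t ht0.le htr
  have hu : Summable fun n : ℕ => (n : ℝ) * |a n| * t ^ (n - 1) := by
    rw [← summable_nat_add_iff 1]
    refine hd.congr fun n => ?_
    unfold dCoef
    rw [abs_mul, abs_of_nonneg (by positivity : (0:ℝ) ≤ n + 1)]
    push_cast; simp
  have := hasDerivAt_tsum_of_isPreconnected (t := Metric.ball (0:ℝ) t)
    (g := fun n y => a n * y ^ n) (g' := fun n y => a n * (n * y ^ (n-1))) (y₀ := 0) (y := x) hu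
    Metric.isOpen_ball (convex_ball 0 t).isPreconnected
    (fun n y _ => (hasDerivAt_pow n y).const_mul (a n)) ?_ (by simpa) ?_ (by simpa using hxt)
  · convert! this using 1
    have hs : Summable fun n : ℕ => a n * (n * x ^ (n-1)) := by
      refine Summable.of_norm_bounded hu fun n => ?_
      rw [norm_mul, norm_mul, norm_pow]
      simp only [Real.norm_eq_abs, Nat.abs_cast]
      rw [← mul_assoc, mul_comm |a n|]
      gcongr
    rw [hs.tsum_eq_zero_add]
    simp only [pS, dCoef]
    simp
    refine tsum_congr fun n => ?_
    ring
  · intro n y hy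
    rw [norm_mul, norm_mul, norm_pow]
    simp only [Real.norm_eq_abs, Nat.abs_cast]
    rw [← mul_assoc, mul_comm |a n|]
    have : |y| < t := by simpa using hy
    gcongr
  · exact (h.summable (x := 0) (by simpa using ht0.trans htr)).of_norm

lemma AbsConv.analytic {a : ℕ → ℝ} {r : ℝ} (hr : 0 < r) (h : AbsConv a r) :
    AnalyticOnNhd ℝ (pS a) (Ioo (-r) r) := by
  intro x hx
  have hx' : |x| < r := abs_lt.2 hx
  obtain ⟨t, hxt, htr⟩ := exists_between hx'
  have ht0 : 0 < t := (abs_nonneg x).trans_lt hxt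
  let P := FormalMultilinearSeries.ofScalars ℝ a
  have hrad : ((t.toNNReal : NNReal) : ENNReal) ≤ P.radius := by
    apply FormalMultilinearSeries.le_radius_of_summable
    simpa [P, FormalMultilinearSeries.ofScalars_norm, ht0.le] using h t ht0.le htr
  have hpos : 0 < P.radius := lt_of_lt_of_le (by simpa using! ht0) hrad
  have hfp := P.hasFPowerSeriesOnBall hpos
  have : P.sum = pS a := by
    funext y
    simp [P, FormalMultilinearSeries.sum, pS, mul_comm]
  rw [this] at hfp
  refine hfp.analyticAt_of_mem ?_
  refine Metric.eball_subset_eball hrad ?_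
  simp only [Metric.mem_eball, edist_dist, dist_zero_right, Real.norm_eq_abs]
  exact (ENNReal.ofReal_lt_ofReal_iff ht0).2 hxt

lemma AbsConv.pow {a : ℕ → ℝ} {r : ℝ} (h : AbsConv a r) {x : ℝ} (hx : |x| < r) (p : ℕ) :
    (Summable fun n => ‖PowerSeries.coeff n ((PowerSeries.mk a) ^ p) * x ^ n‖) ∧
    HasSum (fun n => PowerSeries.coeff n ((PowerSeries.mk a) ^ p) * x ^ n) (pS a x ^ p) := by
  induction p with
  | zero =>
    have : ∀ n, n ≠ 0 → PowerSeries.coeff n ((PowerSeries.mk a) ^ 0) * x ^ n = 0 := by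
      intro n hn; simp [PowerSeries.coeff_one, hn]
    constructor
    · refine summable_of_ne_finset_zero (s := {0}) fun n hn => ?_
      rw [this n (by simpa using hn), norm_zero]
    · convert! hasSum_single 0 this using 1
      simp
  | succ p ih =>
    have e : ∀ n, PowerSeries.coeff n ((PowerSeries.mk a) ^ (p+1)) * x ^ n =
        ∑ kl ∈ Finset.HasAntidiagonal.antidiagonal n, (PowerSeries.coeff kl.1 ((PowerSeries.mk a) ^ p) * x ^ kl.1) *
          (a kl.2 * x ^ kl.2) := by
      intro n
      rw [pow_succ, PowerSeries.coeff_mul, Finset.sum_mul]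
      refine Finset.sum_congr rfl fun y hy => ?_
      rw [← Finset.HasAntidiagonal.mem_antidiagonal.1 hy, PowerSeries.coeff_mk, pow_add]; ring
    have hs := summable_norm_sum_mul_antidiagonal_of_summable_norm ih.1 (h.summable hx)
    have ht := tsum_mul_tsum_eq_tsum_sum_antidiagonal_of_summable_norm ih.1 (h.summable hx)
    simp only [e]
    refine ⟨hs, ?_⟩
    rw [pow_succ, ← ih.2.tsum_eq, pS, ht]
    exact hs.of_norm.hasSum

lemma pS_zero (a : ℕ → ℝ) : pS a 0 = a 0 := by
  rw [pS, tsum_eq_single 0]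
  · simp
  · intro n hn; simp [hn]

lemma existence_part (p : ℕ) (hp : 7 ≤ p) (c : ℝ) :
    ∃ ε : ℝ, 0 < ε ∧ ∃ u : ℝ → ℝ, AnalyticOnNhd ℝ u (Ioo (-ε) ε) ∧
      (∀ ρ ∈ Ioo (0 : ℝ) ε, ProfileEq p u ρ) ∧
      u 0 = c ∧ deriv u 0 = 0 ∧
      deriv (deriv u) 0 = (2 / 3) * (((p : ℝ) + 1) * c / ((p : ℝ) - 1) ^ 2 - c ^ p / 2) := by
  obtain ⟨r, hr0, hr1, hb⟩ := aCoef_bound p hp c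
  set a := aCoef p c with ha
  have hA : AbsConv a r := by
    intro s hs hsr
    have : Summable fun n => |a n| * r ^ n :=
      summable_of_sum_range_le (fun n => by positivity) hb
    refine Summable.of_nonneg_of_le (fun n => by positivity) (fun n => ?_) this
    gcongr
  have hd1 : ∀ x, |x| < r → deriv (pS a) x = pS (dCoef a) x := fun x hx => (hA.hasDerivAt hx).deriv
  have hd2 : ∀ x, |x| < r → deriv (deriv (pS a)) x = pS (dCoef (dCoef a)) x := by
    intro x hx
    have : deriv (pS a) =ᶠ[nhds x] pS (dCoef a) := by
      have : ∀ᶠ y in nhds x, |y| < r := continuous_abs.continuousAt.eventually_lt_const hx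
      filter_upwards [this] with y hy using hd1 y hy
    rw [this.deriv_eq, (hA.deriv.hasDerivAt hx).deriv]
  have h00 : |(0:ℝ)| < r := by simpa
  refine ⟨r, hr0, pS a, hA.analytic hr0, ?_, ?_, ?_, ?_⟩
  · rintro x ⟨hx0, hxr⟩
    have hx : |x| < r := by rwa [abs_of_pos hx0]
    unfold ProfileEq
    rw [hd1 x hx, hd2 x hx]
    have H0 := hA.hasSum hx
    have H1 := hA.deriv.hasSum hx
    have H2 := hA.deriv.deriv.hasSum hx
    have Hp := (hA.pow hx p).2
    -- x u'
    have G1 : HasSum (fun n : ℕ => (n : ℝ) * a n * x ^ n) (x * pS (dCoef a) x) := by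
      rw [← hasSum_nat_add_iff' 1]
      simp only [Finset.sum_range_one, Nat.cast_zero, zero_mul, sub_zero]
      convert! H1.mul_left x using 2 with n
      simp only [dCoef]; push_cast; ring
    have G2 : HasSum (fun n : ℕ => (n : ℝ) * (n - 1) * a n * x ^ n) (x ^ 2 * pS (dCoef (dCoef a)) x) := by
      rw [← hasSum_nat_add_iff' 2]
      simp only [Finset.sum_range_succ, Finset.sum_range_zero, Nat.cast_zero, Nat.cast_one, zero_mul, sub_zero, sub_self, mul_zero, add_zero]
      convert! H2.mul_left (x ^ 2) using 2 with n
      simp only [dCoef]; push_cast; ring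
    have G3 : HasSum (fun n : ℕ => ((n : ℝ) + 2) * a (n + 2) * x ^ n) (pS (dCoef a) x / x) := by
      have := (hasSum_nat_add_iff' 1).2 H1
      simp only [Finset.sum_range_one, dCoef] at this
      have h1 : a 1 = 0 := aCoef_one p c
      simp only [zero_add, h1, mul_zero, zero_mul, sub_zero] at this
      convert! this.div_const x using 2 with n
      field_simp
      push_cast; ring
    have T := ((((H2.sub G2).add (G3.mul_left 2)).sub (G1.mul_left (2 + 2 * alphaP p))).sub
      (H0.mul_left (alphaP p * (alphaP p + 1)))).add Hp
    have Z : HasSum (fun _ : ℕ => (0:ℝ)) 0 := hasSum_zero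
    have E : (fun n : ℕ => dCoef (dCoef a) n * x ^ n - (n : ℝ) * (n - 1) * a n * x ^ n
        + 2 * (((n : ℝ) + 2) * a (n + 2) * x ^ n) - (2 + 2 * alphaP p) * ((n : ℝ) * a n * x ^ n)
        - alphaP p * (alphaP p + 1) * (a n * x ^ n)
        + PowerSeries.coeff n ((PowerSeries.mk a) ^ p) * x ^ n) = fun _ => 0 := by
      funext n
      have hrec := aCoef_rec p c n
      rw [← ha, eq_div_iff (by positivity)] at hrec
      simp only [dCoef]
      push_cast
      linear_combination x ^ n * hrec
    rw [E] at T
    have E' := T.unique Z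
    rw [← E']; field_simp; ring
  · rw [pS_zero, ha, aCoef_zero]
  · rw [hd1 0 h00, pS_zero, dCoef, ha]; simp [aCoef_one]
  · rw [hd2 0 h00, pS_zero]
    have h2 := aCoef_rec p c 0
    simp only [PowerSeries.coeff_zero_eq_constantCoeff, map_pow, zero_add] at h2
    simp only [dCoef, ha, zero_add]
    have hp' : (p:ℝ) - 1 ≠ 0 := by
      have : (7:ℝ) ≤ p := by exact_mod_cast hp
      linarith
    norm_num
    rw [h2, aCoef_zero, ← PowerSeries.coeff_zero_eq_constantCoeff_apply, PowerSeries.coeff_mk, aCoef_zero]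
    simp only [alphaP]
    field_simp
    push_cast
    ring

lemma unique_part (p : ℕ) (c : ℝ) : ∀ u₁ u₂ : ℝ → ℝ, AnalyticAt ℝ u₁ 0 → AnalyticAt ℝ u₂ 0 →
      u₁ 0 = c → u₂ 0 = c → deriv u₁ 0 = 0 → deriv u₂ 0 = 0 →
      (∃ ε₁ : ℝ, 0 < ε₁ ∧ ∀ ρ ∈ Ioo (0 : ℝ) ε₁, ProfileEq p u₁ ρ) →
      (∃ ε₂ : ℝ, 0 < ε₂ ∧ ∀ ρ ∈ Ioo (0 : ℝ) ε₂, ProfileEq p u₂ ρ) →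
      u₁ =ᶠ[nhds 0] u₂ := by
  rintro u v hu hv hu0 hv0 - - ⟨ε₁, he1, E1⟩ ⟨ε₂, he2, E2⟩
  by_contra hne
  have hw : AnalyticAt ℝ (fun x => u x - v x) 0 := hu.sub hv
  have hnz : ¬ ∀ᶠ z in nhds (0:ℝ), u z - v z = 0 := by
    intro h; exact hne (h.mono fun z hz => sub_eq_zero.1 hz)
  obtain ⟨m, g, hg, hg0, hgw⟩ := hw.exists_eventuallyEq_pow_smul_nonzero_iff.2 hnz
  simp only [sub_zero, smul_eq_mul] at hgw
  have hm : m ≠ 0 := by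
    rintro rfl
    have := hgw.self_of_nhds
    rw [hu0, hv0] at this
    simp at this
    exact hg0 this.symm
  obtain ⟨k, rfl⟩ := Nat.exists_eq_succ_of_ne_zero hm
  -- derivatives
  have D1 : ∀ᶠ x in nhds (0:ℝ), deriv u x - deriv v x =
      (k + 1) * x ^ k * g x + x ^ (k + 1) * deriv g x := by
    filter_upwards [hgw.eventually_nhds, hu.eventually_analyticAt, hv.eventually_analyticAt,
      hg.eventually_analyticAt] with x hx hux hvx hgx
    have h1 := (hux.differentiableAt.hasDerivAt.sub hvx.differentiableAt.hasDerivAt).congr_of_eventuallyEq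
      (f₁ := fun z => z ^ (k+1) * g z) (hx.mono fun z hz => hz.symm)
    have h2 := (hasDerivAt_pow (k+1) x).mul hgx.differentiableAt.hasDerivAt
    rw [h1.unique h2]; push_cast; simp
  have D2 : ∀ᶠ x in nhds (0:ℝ), deriv (deriv u) x - deriv (deriv v) x =
      (k + 1) * (k * x ^ (k - 1) * g x + x ^ k * deriv g x)
        + ((k + 1) * x ^ k * deriv g x + x ^ (k + 1) * deriv (deriv g) x) := by
    filter_upwards [D1.eventually_nhds, hu.deriv.eventually_analyticAt, hv.deriv.eventually_analyticAt,
      hg.eventually_analyticAt, hg.deriv.eventually_analyticAt] with x hx hux hvx hgx hgx'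
    have h1 := (hux.differentiableAt.hasDerivAt.sub hvx.differentiableAt.hasDerivAt).congr_of_eventuallyEq
      (f₁ := fun z => (k + 1) * z ^ k * g z + z ^ (k + 1) * deriv g z) (hx.mono fun z hz => hz.symm)
    have h2 := ((((hasDerivAt_pow k x).const_mul ((k:ℝ)+1)).mul hgx.differentiableAt.hasDerivAt)).add
      ((hasDerivAt_pow (k+1) x).mul hgx'.differentiableAt.hasDerivAt)
    rw [h1.unique h2]; push_cast; simp; ring
  let S : ℝ → ℝ := fun x => ∑ i ∈ Finset.range p, u x ^ i * v x ^ (p - 1 - i)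
  have hS : ∀ x, u x ^ p - v x ^ p = (u x - v x) * S x := fun x =>
    by
    rw [mul_comm]; exact ((Commute.all (u x) (v x)).geom_sum₂_mul p).symm
  have hSc : ContinuousAt S 0 := by
    have := hu.continuousAt
    have := hv.continuousAt
    simp only [S]
    fun_prop
  let F : ℝ → ℝ := fun x => (1 - x ^ 2) * ((k + 1) * (k * g x + x * deriv g x)
        + ((k + 1) * x * deriv g x + x ^ 2 * deriv (deriv g) x))
      + (2 - (2 + 2 * alphaP p) * x ^ 2) * ((k + 1) * g x + x * deriv g x)
      - alphaP p * (alphaP p + 1) * x ^ 2 * g x + x ^ 2 * g x * S x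
  have hFc : ContinuousAt F 0 := by
    have := hg.continuousAt
    have := hg.deriv.continuousAt
    have := hg.deriv.deriv.continuousAt
    simp only [F]
    fun_prop
  have hF : ∀ᶠ x in nhdsWithin (0:ℝ) (Ioi 0), F x = 0 := by
    filter_upwards [D1.filter_mono nhdsWithin_le_nhds, D2.filter_mono nhdsWithin_le_nhds,
      hgw.filter_mono nhdsWithin_le_nhds, Ioo_mem_nhdsGT he1, Ioo_mem_nhdsGT he2] with x d1 d2 d0 x1 x2
    have e1 := E1 x x1
    have e2 := E2 x x2
    have hx : x ≠ 0 := x1.1.ne'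
    unfold ProfileEq at e1 e2
    have e3 : (1 - x ^ 2) * (deriv (deriv u) x - deriv (deriv v) x)
      + (2 / x - (2 + 2 * alphaP p) * x) * (deriv u x - deriv v x)
      - alphaP p * (alphaP p + 1) * (u x - v x) + (u x - v x) * S x = 0 := by
      rw [← hS]; linarith
    rw [d0, d1, d2] at e3
    have hk : (k:ℝ) * x ^ (k - 1) = k * x ^ k / x := by
      rcases k with _ | k
      · simp
      · simp [pow_succ]; field_simp
    rw [hk] at e3
    have : x ^ k * F x = 0 := by
      simp only [F]
      field_simp at e3
      have hxk : x ^ k ≠ 0 := pow_ne_zero _ hx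
      linear_combination e3
    exact (mul_eq_zero.1 this).resolve_left (pow_ne_zero _ hx)
  have hlim : Tendsto F (nhdsWithin (0:ℝ) (Ioi 0)) (nhds (F 0)) := hFc.tendsto.mono_left nhdsWithin_le_nhds
  have hF0 : F 0 = 0 := tendsto_nhds_unique (hlim.congr' hF) tendsto_const_nhds
  simp [F] at hF0
  have : ((k:ℝ) + 1) * (k + 2) * g 0 = 0 := by linarith
  have hk1 : ((k:ℝ) + 1) * (k + 2) ≠ 0 := by positivity
  exact hg0 ((mul_eq_zero.1 this).resolve_left hk1)

/-- For each `c` there is a solution of the profile equation,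
real-analytic near `ρ = 0`, with `u(0) = c`, `u'(0) = 0` and
`u''(0) = (2/3)((p+1)c/(p-1)² - c^p/2)`; and any two such solutions coincide near `0`. -/
theorem local_existence_at_zero (p : ℕ) (hp_odd : Odd p) (hp : 7 ≤ p) (c : ℝ) :
    (∃ ε : ℝ, 0 < ε ∧ ∃ u : ℝ → ℝ, AnalyticOnNhd ℝ u (Ioo (-ε) ε) ∧
      (∀ ρ ∈ Ioo (0 : ℝ) ε, ProfileEq p u ρ) ∧
      u 0 = c ∧ deriv u 0 = 0 ∧
      deriv (deriv u) 0 = (2 / 3) * (((p : ℝ) + 1) * c / ((p : ℝ) - 1) ^ 2 - c ^ p / 2)) ∧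
    (∀ u₁ u₂ : ℝ → ℝ, AnalyticAt ℝ u₁ 0 → AnalyticAt ℝ u₂ 0 →
      u₁ 0 = c → u₂ 0 = c → deriv u₁ 0 = 0 → deriv u₂ 0 = 0 →
      (∃ ε₁ : ℝ, 0 < ε₁ ∧ ∀ ρ ∈ Ioo (0 : ℝ) ε₁, ProfileEq p u₁ ρ) →
      (∃ ε₂ : ℝ, 0 < ε₂ ∧ ∀ ρ ∈ Ioo (0 : ℝ) ε₂, ProfileEq p u₂ ρ) →
      u₁ =ᶠ[nhds 0] u₂) := by
  exact ⟨existence_part p hp c, unique_part p c⟩
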